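/- arXiv:1112.3291 — 2 statements merged into one kernel-verified Lean document; each statement's English description precedes it below -/
import Mathlib

section
/- The ℤ-linear map d : T ⊗[ℤ] V → T determined by d(x ⊗ e_i) = x · e_{σ(i)} − c(i) · x for x ∈ T and basis vectors e_i of V is injective. -/
open TensorProduct

/-!
Let `ε` be the augmentation of the tensor algebra `T` with `ε (ι m) = c m`. Fox calculus gives a
linear map `∂ : T → T ⊗ M` with `∂ (x * y) = x • ∂ y + ε y • ∂ x` and `∂ (ι m) = 1 ⊗ m`; it exists
because `x ↦ (x, ∂ x)` is an algebra map from `T` to a square-zero extension of `T`, hence is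
given by the universal property. Now `∂ (x * (ι m - c m)) = x ⊗ m`, so `∂` is a left inverse of the
boundary map `x ⊗ m ↦ x * ι m - c m • x`. Relabelling the basis along `σ` only precomposes this
map with an injection.
-/

section FoxBimodule

variable {R M : Type*} [CommSemiring R] [AddCommMonoid M] [Module R M]

/-- The `TensorAlgebra R M`-bimodule of values of the Fox derivative: the left module
`TensorAlgebra R M ⊗[R] M`, on which `x` acts from the right by the scalar `lift R c x`. It is a
type synonym because `TensorAlgebra R M ⊗[R] M` already has another right action, through
right multiplication on the first factor. -/
@[nolint unusedArguments]
def FoxBimodule (_c : M →ₗ[R] R) : Type _ := TensorAlgebra R M ⊗[R] M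

namespace FoxBimodule

variable (c : M →ₗ[R] R)

instance : AddCommMonoid (FoxBimodule c) :=
  inferInstanceAs (AddCommMonoid (TensorAlgebra R M ⊗[R] M))

instance : Module R (FoxBimodule c) :=
  inferInstanceAs (Module R (TensorAlgebra R M ⊗[R] M))

instance : Module (TensorAlgebra R M) (FoxBimodule c) :=
  inferInstanceAs (Module (TensorAlgebra R M) (TensorAlgebra R M ⊗[R] M))

instance : IsScalarTower R (TensorAlgebra R M) (FoxBimodule c) :=
  inferInstanceAs (IsScalarTower R (TensorAlgebra R M) (TensorAlgebra R M ⊗[R] M))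

instance : Module (TensorAlgebra R M)ᵐᵒᵖ (FoxBimodule c) :=
  Module.compHom _ ((TensorAlgebra.lift R c).fromOpposite fun _ _ ↦ Commute.all _ _).toRingHom

/-- The identity of `TensorAlgebra R M ⊗[R] M`, as an isomorphism of left modules onto its type
synonym `FoxBimodule c`. -/
def of : TensorAlgebra R M ⊗[R] M ≃ₗ[TensorAlgebra R M] FoxBimodule c :=
  LinearEquiv.refl _ _

theorem op_smul_def (x : TensorAlgebra R M) (w : FoxBimodule c) :
    MulOpposite.op x • w = TensorAlgebra.lift R c x • w :=
  rfl

instance : SMulCommClass (TensorAlgebra R M) (TensorAlgebra R M)ᵐᵒᵖ (FoxBimodule c) where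
  smul_comm x y w := by
    obtain ⟨y, rfl⟩ := MulOpposite.op_surjective y
    rw [op_smul_def, op_smul_def, smul_algebra_smul_comm]

instance : IsScalarTower R (TensorAlgebra R M)ᵐᵒᵖ (FoxBimodule c) where
  smul_assoc r x w := by
    obtain ⟨x, rfl⟩ := MulOpposite.op_surjective x
    rw [← MulOpposite.op_smul, op_smul_def, op_smul_def, map_smul, smul_assoc]

end FoxBimodule

end FoxBimodule

section foxDerivative

variable {R M : Type*} [CommSemiring R] [AddCommMonoid M] [Module R M] (c : M →ₗ[R] R)

/-- The algebra map `x ↦ (x, ∂ x)` into the square-zero extension of `TensorAlgebra R M` by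
`FoxBimodule c`; its multiplicativity encodes the Leibniz rule of the Fox derivative `∂`. -/
noncomputable def foxLift :
    TensorAlgebra R M →ₐ[R] TrivSqZeroExt (TensorAlgebra R M) (FoxBimodule c) :=
  TensorAlgebra.lift R <|
    TrivSqZeroExt.inlAlgHom R (TensorAlgebra R M) (FoxBimodule c) ∘ₗ TensorAlgebra.ι R +
      (TrivSqZeroExt.inrHom (TensorAlgebra R M) (FoxBimodule c) ∘ₗ
        (FoxBimodule.of c).toLinearMap).restrictScalars R ∘ₗ
          TensorProduct.mk R (TensorAlgebra R M) M 1

theorem fst_foxLift (x : TensorAlgebra R M) : (foxLift c x).fst = x := by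
  have fst_comp : (TrivSqZeroExt.fstHom R (TensorAlgebra R M) (FoxBimodule c)).comp (foxLift c) =
      AlgHom.id R (TensorAlgebra R M) := by
    ext m
    simp [foxLift]
  exact DFunLike.congr_fun fst_comp x

/-- The total Fox derivative on `TensorAlgebra R M`, with respect to the augmentation
`TensorAlgebra.lift R c`. -/
noncomputable def foxDerivative : TensorAlgebra R M →ₗ[R] TensorAlgebra R M ⊗[R] M :=
  ((FoxBimodule.of c).symm.toLinearMap ∘ₗ
    TrivSqZeroExt.sndHom (TensorAlgebra R M) (FoxBimodule c)).restrictScalars R ∘ₗ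
      (foxLift c).toLinearMap

theorem foxDerivative_apply (x : TensorAlgebra R M) :
    foxDerivative c x = (FoxBimodule.of c).symm (foxLift c x).snd :=
  rfl

theorem foxDerivative_ι (m : M) : foxDerivative c (TensorAlgebra.ι R m) = 1 ⊗ₜ m := by
  simp [foxDerivative_apply, foxLift]

theorem foxDerivative_mul (x y : TensorAlgebra R M) :
    foxDerivative c (x * y) =
      x • foxDerivative c y + TensorAlgebra.lift R c y • foxDerivative c x := by
  simp only [foxDerivative_apply, map_mul, TrivSqZeroExt.snd_mul, fst_foxLift,
    FoxBimodule.op_smul_def, map_add,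
    LinearMapClass.map_smul_of_tower (FoxBimodule.of c).symm]

theorem foxDerivative_mul_ι (x : TensorAlgebra R M) (m : M) :
    foxDerivative c (x * TensorAlgebra.ι R m) = x ⊗ₜ m + c m • foxDerivative c x := by
  rw [foxDerivative_mul, foxDerivative_ι, TensorProduct.smul_tmul', smul_eq_mul, mul_one,
    TensorAlgebra.lift_ι_apply]

end foxDerivative

section foxBoundary

variable {R M : Type*} [CommRing R] [AddCommMonoid M] [Module R M] (c : M →ₗ[R] R)

/-- The boundary map `x ⊗ m ↦ x * ι m - c m • x` of the length-one resolution of `R`, seen as a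
`TensorAlgebra R M`-module through the augmentation `TensorAlgebra.lift R c`. -/
noncomputable def foxBoundary : TensorAlgebra R M ⊗[R] M →ₗ[R] TensorAlgebra R M :=
  TensorProduct.lift <|
    (LinearMap.mul R (TensorAlgebra R M)).compl₂ (TensorAlgebra.ι R) -
      (LinearMap.lsmul R (TensorAlgebra R M) ∘ₗ c).flip

theorem foxBoundary_tmul (x : TensorAlgebra R M) (m : M) :
    foxBoundary c (x ⊗ₜ m) = x * TensorAlgebra.ι R m - c m • x := by
  simp [foxBoundary]

theorem foxDerivative_comp_foxBoundary : foxDerivative c ∘ₗ foxBoundary c = LinearMap.id := by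
  refine TensorProduct.ext' fun x m ↦ ?_
  rw [LinearMap.comp_apply, foxBoundary_tmul, map_sub, map_smul, foxDerivative_mul_ι,
    add_sub_cancel_right, LinearMap.id_apply]

theorem foxBoundary_injective : Function.Injective (foxBoundary c) :=
  LinearMap.injective_of_comp_eq_id _ _ (foxDerivative_comp_foxBoundary c)

end foxBoundary

theorem tensorAlgebra_boundary_injective_general
    {R ι κ : Type*} [CommRing R] {σ : ι → κ} (hσ : Function.Injective σ) (c : ι → R)
    (d : TensorAlgebra R (κ →₀ R) ⊗[R] (ι →₀ R) →ₗ[R] TensorAlgebra R (κ →₀ R))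
    (hd : ∀ (x : TensorAlgebra R (κ →₀ R)) (i : ι),
      d (x ⊗ₜ[R] Finsupp.single i 1) =
        x * TensorAlgebra.ι R (Finsupp.single (σ i) 1) - c i • x) :
    Function.Injective d := by
  let c' : (κ →₀ R) →ₗ[R] R := Finsupp.linearCombination R (Function.extend σ c 0)
  have d_eq : d = foxBoundary c' ∘ₗ
      (Finsupp.lmapDomain R R σ).lTensor (TensorAlgebra R (κ →₀ R)) := by
    refine TensorProduct.ext (LinearMap.ext fun x ↦ Finsupp.lhom_ext' fun i ↦ LinearMap.ext_ring ?_)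
    simp [hd, foxBoundary_tmul, c', hσ.extend_apply]
  rw [d_eq]
  exact (foxBoundary_injective c').comp <|
    Module.Flat.lTensor_preserves_injective_linearMap _ (Finsupp.mapDomain_injective hσ)

/-- Let `V = ι →₀ ℤ` with basis `(e_i)`, `T = TensorAlgebra ℤ V`, `σ : ι → ι` an
involution and `c : ι → ℤ` with `c ∘ σ = c`.  The ℤ-linear map
`d : T ⊗[ℤ] V → T` determined by `d (x ⊗ e_i) = x * e_{σ i} - c i • x` is injective. -/
theorem tensorAlgebra_boundary_injective
    {ι : Type*} (σ : ι → ι) (hσ : σ ∘ σ = id) (c : ι → ℤ) (hc : c ∘ σ = c)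
    (d : TensorAlgebra ℤ (ι →₀ ℤ) ⊗[ℤ] (ι →₀ ℤ) →ₗ[ℤ] TensorAlgebra ℤ (ι →₀ ℤ))
    (hd : ∀ (x : TensorAlgebra ℤ (ι →₀ ℤ)) (i : ι),
      d (x ⊗ₜ[ℤ] Finsupp.single i 1) =
        x * TensorAlgebra.ι ℤ (Finsupp.single (σ i) 1) - c i • x) :
    Function.Injective d :=
  tensorAlgebra_boundary_injective_general
    (Function.Involutive.injective (f := σ) (congrFun hσ)) c d hd
end

section
/- The range of the ℤ-linear map d : T ⊗[ℤ] V → T, d(x ⊗ e_i) = x · e_{σ(i)} − c(i) · x, equals the kernel of the ℤ-algebra homomorphism ε : T → ℤ with ε(e_i) = c(i). Together with injectivity of d and surjectivity of ε, the augmented sequence 0 → T ⊗[ℤ] V → T → ℤ → 0 is exact. -/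
open TensorProduct

/-!
Write `T` for the tensor algebra of a module `V`, let `γ : V → R` be linear and let `ε : T → R` be
the algebra map extending it. The map `Φ (r, m) = r + d m` from `R × (T ⊗ V)` to `T`, where
`d (x ⊗ v) = x * v - γ v • x`, is inverted by transport of structure. Since
`Φ p * v = γ v • Φ p + d (Φ p ⊗ v)`, right multiplication by `v` on `T` lifts along `Φ` to the
operator `p ↦ γ v • p + (0, Φ p ⊗ v)`, and by the universal property these operators make
`R × (T ⊗ V)` a right `T`-module with `Φ` equivariant. Then `Ψ y = (1, 0) · y` satisfies
`Φ (Ψ y) = y` and `Ψ (d m) = (0, m)`: the first identity says that `y - ε y` is in the range of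
`d`, the second that `d` is injective. Relabelling the basis of the factor `V` of `T ⊗ V`
precomposes `d` with an isomorphism, so it affects neither conclusion.
-/

section AugmentationIdeal

variable {R V : Type*} [CommRing R] [AddCommGroup V] [Module R V] (γ : V →ₗ[R] R)

/-- The differential `x ⊗ v ↦ x * (v - γ v)` of the length-one resolution of `R`, viewed as a module
over the tensor algebra through `TensorAlgebra.lift R γ`. -/
noncomputable def augmentationDifferential :
    TensorAlgebra R V ⊗[R] V →ₗ[R] TensorAlgebra R V :=
  LinearMap.mul' R (TensorAlgebra R V) ∘ₗ
    (TensorAlgebra.ι R - Algebra.linearMap R (TensorAlgebra R V) ∘ₗ γ).lTensor (TensorAlgebra R V)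

@[simp]
theorem augmentationDifferential_tmul (x : TensorAlgebra R V) (v : V) :
    augmentationDifferential γ (x ⊗ₜ v) = x * TensorAlgebra.ι R v - γ v • x := by
  simp [augmentationDifferential, ← Algebra.commutes, ← Algebra.smul_def]

theorem lift_augmentationDifferential (m : TensorAlgebra R V ⊗[R] V) :
    TensorAlgebra.lift R γ (augmentationDifferential γ m) = 0 := by
  induction m with
  | zero => simp
  | tmul x v => simp [mul_comm]
  | add m n hm hn => simp [hm, hn]

/-- The map `Φ (r, m) = r + d m` assembling an element of the tensor algebra from a scalar and an
element of the augmentation ideal. -/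
noncomputable def augmentationSum : R × (TensorAlgebra R V ⊗[R] V) →ₗ[R] TensorAlgebra R V :=
  (Algebra.linearMap R (TensorAlgebra R V)).coprod (augmentationDifferential γ)

theorem augmentationSum_apply (p : R × (TensorAlgebra R V ⊗[R] V)) :
    augmentationSum γ p =
      algebraMap R (TensorAlgebra R V) p.1 + augmentationDifferential γ p.2 :=
  rfl

/-- The lift along `augmentationSum γ` of right multiplication by a vector. -/
noncomputable def liftedMulRight :
    V →ₗ[R] Module.End R (R × (TensorAlgebra R V ⊗[R] V)) :=
  γ.smulRight LinearMap.id +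
    (augmentationSum γ).lcomp R _ ∘ₗ
      (LinearMap.inr R R (TensorAlgebra R V ⊗[R] V)).compRight R ∘ₗ
        (TensorProduct.mk R (TensorAlgebra R V) V).flip

theorem liftedMulRight_apply (v : V) (p : R × (TensorAlgebra R V ⊗[R] V)) :
    liftedMulRight γ v p = γ v • p + (0, augmentationSum γ p ⊗ₜ v) :=
  rfl

theorem augmentationSum_liftedMulRight (v : V) (p : R × (TensorAlgebra R V ⊗[R] V)) :
    augmentationSum γ (liftedMulRight γ v p) = augmentationSum γ p * TensorAlgebra.ι R v := by
  rw [liftedMulRight_apply, map_add, map_smul, augmentationSum_apply γ (0, _)]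
  simp

/-- The right action of the tensor algebra on `R × (T ⊗ V)` extending `liftedMulRight γ`; a right
action is encoded as a homomorphism to the opposite of the endomorphism algebra. -/
noncomputable def liftedRightAction :
    TensorAlgebra R V →ₐ[R] (Module.End R (R × (TensorAlgebra R V ⊗[R] V)))ᵐᵒᵖ :=
  TensorAlgebra.lift R ((MulOpposite.opLinearEquiv R).toLinearMap ∘ₗ liftedMulRight γ)

theorem unop_liftedRightAction_ι (v : V) :
    (liftedRightAction γ (TensorAlgebra.ι R v)).unop = liftedMulRight γ v := by
  simp [liftedRightAction]

theorem augmentationSum_liftedRightAction (y : TensorAlgebra R V)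
    (p : R × (TensorAlgebra R V ⊗[R] V)) :
    augmentationSum γ ((liftedRightAction γ y).unop p) = augmentationSum γ p * y := by
  induction y using TensorAlgebra.induction generalizing p with
  | algebraMap r => simp [MulOpposite.algebraMap_apply, ← Algebra.commutes, Algebra.smul_def]
  | ι v => rw [unop_liftedRightAction_ι, augmentationSum_liftedMulRight]
  | mul a b ha hb => simp [ha, hb, mul_assoc]
  | add a b ha hb => simp [ha, hb, mul_add]

/-- The inverse `Ψ y = (1, 0) · y` of `augmentationSum γ`; its second component is the Fox
derivative of `y`. -/
noncomputable def augmentationSplitting :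
    TensorAlgebra R V →ₗ[R] R × (TensorAlgebra R V ⊗[R] V) :=
  LinearMap.applyₗ (1, 0) ∘ₗ (MulOpposite.opLinearEquiv R).symm.toLinearMap ∘ₗ
    (liftedRightAction γ).toLinearMap

theorem augmentationSplitting_apply (y : TensorAlgebra R V) :
    augmentationSplitting γ y = (liftedRightAction γ y).unop (1, 0) :=
  rfl

theorem augmentationSum_augmentationSplitting (y : TensorAlgebra R V) :
    augmentationSum γ (augmentationSplitting γ y) = y := by
  rw [augmentationSplitting_apply, augmentationSum_liftedRightAction, augmentationSum_apply]
  simp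

theorem augmentationSplitting_mul_ι (x : TensorAlgebra R V) (v : V) :
    augmentationSplitting γ (x * TensorAlgebra.ι R v) =
      γ v • augmentationSplitting γ x + (0, x ⊗ₜ v) := by
  calc augmentationSplitting γ (x * TensorAlgebra.ι R v)
      = liftedMulRight γ v (augmentationSplitting γ x) := by
        simp [augmentationSplitting_apply, unop_liftedRightAction_ι]
    _ = γ v • augmentationSplitting γ x + (0, x ⊗ₜ v) := by
        rw [liftedMulRight_apply, augmentationSum_augmentationSplitting]

theorem augmentationSplitting_augmentationDifferential (m : TensorAlgebra R V ⊗[R] V) :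
    augmentationSplitting γ (augmentationDifferential γ m) = (0, m) := by
  induction m with
  | zero => simp only [map_zero, Prod.mk_zero_zero]
  | tmul x v => simp [augmentationSplitting_mul_ι]
  | add m n hm hn => simp [hm, hn]

theorem augmentationDifferential_injective : Function.Injective (augmentationDifferential γ) :=
  Function.LeftInverse.injective (g := fun y ↦ (augmentationSplitting γ y).2) fun m ↦
    congrArg Prod.snd (augmentationSplitting_augmentationDifferential γ m)

theorem augmentationSplitting_fst (y : TensorAlgebra R V) :
    (augmentationSplitting γ y).1 = TensorAlgebra.lift R γ y := by
  conv_rhs => rw [← augmentationSum_augmentationSplitting γ y]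
  rw [augmentationSum_apply, map_add, lift_augmentationDifferential, AlgHom.commutes]
  simp

theorem range_augmentationDifferential :
    LinearMap.range (augmentationDifferential γ) =
      LinearMap.ker (TensorAlgebra.lift R γ).toLinearMap := by
  refine le_antisymm ?_ fun y (hy : TensorAlgebra.lift R γ y = 0) ↦
    ⟨(augmentationSplitting γ y).2, ?_⟩
  · rintro _ ⟨m, rfl⟩
    exact lift_augmentationDifferential γ m
  · simpa [augmentationSum_apply, augmentationSplitting_fst, hy] using
      augmentationSum_augmentationSplitting γ y

end AugmentationIdeal

theorem tensorAlgebra_resolution_exact_general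
    {R ι κ : Type*} [CommRing R] (σ : κ ≃ ι) (c : κ → R)
    (ε : TensorAlgebra R (ι →₀ R) →ₐ[R] R)
    (hε : ∀ i : κ, ε (TensorAlgebra.ι R (Finsupp.single (σ i) 1)) = c i)
    (d : TensorAlgebra R (ι →₀ R) ⊗[R] (κ →₀ R) →ₗ[R] TensorAlgebra R (ι →₀ R))
    (hd : ∀ (x : TensorAlgebra R (ι →₀ R)) (i : κ),
      d (x ⊗ₜ[R] Finsupp.single i 1) =
        x * TensorAlgebra.ι R (Finsupp.single (σ i) 1) - c i • x) :
    Function.Injective d ∧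
      LinearMap.range d = LinearMap.ker ε.toLinearMap ∧
      Function.Surjective ε := by
  obtain ⟨γ, rfl⟩ := (TensorAlgebra.lift R).surjective ε
  let s := (Finsupp.domLCongr (R := R) (M := R) σ).lTensor (TensorAlgebra R (ι →₀ R))
  have d_eq : d = augmentationDifferential γ ∘ₗ s.toLinearMap := by
    refine TensorProduct.ext (LinearMap.ext fun x ↦ Finsupp.lhom_ext' fun i ↦ LinearMap.ext_ring ?_)
    simp [s, hd, ← hε]
  refine ⟨?_, ?_, fun r ↦ ⟨algebraMap R _ r, AlgHom.commutes _ r⟩⟩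
  · rw [d_eq]
    exact (augmentationDifferential_injective γ).comp s.injective
  · rw [d_eq, LinearEquiv.range_comp, range_augmentationDifferential]

/-- Let `V = ι →₀ ℤ` with basis `(e_i)`, `T = TensorAlgebra ℤ V`, `σ : ι → ι` an
involution, `c : ι → ℤ` with `c ∘ σ = c`, `ε : T → ℤ` the ℤ-algebra homomorphism with
`ε (e_i) = c i`, and `d : T ⊗[ℤ] V → T` the ℤ-linear map with
`d (x ⊗ e_i) = x * e_{σ i} - c i • x`.  Then the range of `d` equals the kernel of `ε`;
together with injectivity of `d` and surjectivity of `ε`, the augmented sequence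
`0 → T ⊗[ℤ] V → T → ℤ → 0` is exact. -/
theorem tensorAlgebra_resolution_exact
    {ι : Type*} (σ : ι → ι) (hσ : σ ∘ σ = id) (c : ι → ℤ) (hc : c ∘ σ = c)
    (ε : TensorAlgebra ℤ (ι →₀ ℤ) →ₐ[ℤ] ℤ)
    (hε : ∀ i : ι, ε (TensorAlgebra.ι ℤ (Finsupp.single i 1)) = c i)
    (d : TensorAlgebra ℤ (ι →₀ ℤ) ⊗[ℤ] (ι →₀ ℤ) →ₗ[ℤ] TensorAlgebra ℤ (ι →₀ ℤ))
    (hd : ∀ (x : TensorAlgebra ℤ (ι →₀ ℤ)) (i : ι),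
      d (x ⊗ₜ[ℤ] Finsupp.single i 1) =
        x * TensorAlgebra.ι ℤ (Finsupp.single (σ i) 1) - c i • x) :
    Function.Injective d ∧
      LinearMap.range d = LinearMap.ker ε.toLinearMap ∧
      Function.Surjective ε :=
  tensorAlgebra_resolution_exact_general (Function.Involutive.toPerm σ (congrFun hσ)) c ε
    (fun i ↦ (hε (σ i)).trans (congrFun hc i)) d hd
end
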